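/- arXiv:2401.16439 — 5 statements merged into one kernel-verified Lean document; each statement's English description precedes it below -/
import Mathlib

section
/- Let D be a probability measure on ℝ^d, and let c, g : ℝ^d → {−1,+1} be measurable with P_{x∼D}{g(x)=1} > 0. Then 2·P{g(x)=1}·d_D(c,g) = P{c(x)=−1}·P{g(x)=−1} + P{c(x)=1}·P{g(x)=1} − P{c(x)=g(x)}. -/
open MeasureTheory

/-- Statistical parity deviation `d_D(c,g) = P{c=1} − P{c=1 | g=1}`. -/
noncomputable def dev {d : ℕ} (D : Measure (EuclideanSpace ℝ (Fin d)))
    (c g : EuclideanSpace ℝ (Fin d) → ℝ) : ℝ :=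
  (D {x | c x = 1}).toReal -
    (D {x | c x = 1 ∧ g x = 1}).toReal / (D {x | g x = 1}).toReal

section TwoValued

open scoped symmDiff

variable {Ω α : Type*} {a b : α} {c g : Ω → α}

theorem setOf_eq_right_eq_compl (hab : a ≠ b) (hc : ∀ x, c x = a ∨ c x = b) :
    {x | c x = b} = {x | c x = a}ᶜ := by
  ext x
  rcases hc x with h | h <;> simp [h, hab, hab.symm]

theorem setOf_eq_eq_bihimp (hab : a ≠ b) (hc : ∀ x, c x = a ∨ c x = b)
    (hg : ∀ x, g x = a ∨ g x = b) :
    {x | c x = g x} = {x | c x = a} ⇔ {x | g x = a} := by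
  ext x
  rcases hc x with h | h <;> rcases hg x with h' | h' <;>
    simp [bihimp_eq', h, h', hab, hab.symm]

end TwoValued

section Probability

open scoped symmDiff ProbabilityTheory

variable {Ω : Type*} [MeasurableSpace Ω] {μ : Measure Ω} {s t : Set Ω}

theorem cond_real_eq_div (hs : MeasurableSet s) (t : Set Ω) :
    (μ[|s]).real t = μ.real (s ∩ t) / μ.real s := by
  rw [measureReal_def, ProbabilityTheory.cond_apply hs, ENNReal.toReal_mul, ENNReal.toReal_inv,
    inv_mul_eq_div, ← measureReal_def, ← measureReal_def]

variable [IsProbabilityMeasure μ]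

theorem probReal_bihimp (hs : MeasurableSet s) (ht : MeasurableSet t) :
    μ.real (s ⇔ t) = 1 - μ.real s - μ.real t + 2 * μ.real (s ∩ t) := by
  rw [← compl_symmDiff, probReal_compl_eq_one_sub (hs.symmDiff ht), measureReal_symmDiff_eq hs ht]
  have hst : μ.real (s \ t) + μ.real (s ∩ t) = μ.real s := measureReal_sdiff_add_inter ht
  have hts : μ.real (t \ s) + μ.real (s ∩ t) = μ.real t := by
    rw [Set.inter_comm, measureReal_sdiff_add_inter hs]
  linear_combination -hst - hts

theorem two_mul_probReal_mul_sub_inter (hs : MeasurableSet s) (ht : MeasurableSet t) :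
    2 * (μ.real s * μ.real t - μ.real (s ∩ t)) =
      μ.real sᶜ * μ.real tᶜ + μ.real s * μ.real t - μ.real (s ⇔ t) := by
  rw [probReal_compl_eq_one_sub hs, probReal_compl_eq_one_sub ht, probReal_bihimp hs ht]
  ring

theorem stmt_0_general {α : Type*} [MeasurableSpace α] [MeasurableSingletonClass α]
    {a b : α} {c g : Ω → α} (hab : a ≠ b) (hc : Measurable c) (hg : Measurable g)
    (hcval : ∀ x, c x = a ∨ c x = b) (hgval : ∀ x, g x = a ∨ g x = b)
    (hgpos : 0 < μ {x | g x = a}) :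
    2 * μ.real {x | g x = a} *
        (μ.real {x | c x = a} - (μ[|{x | g x = a}]).real {x | c x = a}) =
      μ.real {x | c x = b} * μ.real {x | g x = b} +
        μ.real {x | c x = a} * μ.real {x | g x = a} - μ.real {x | c x = g x} := by
  have hs : MeasurableSet {x | c x = a} := hc (measurableSet_singleton a)
  have ht : MeasurableSet {x | g x = a} := hg (measurableSet_singleton a)
  have ht_ne : μ.real {x | g x = a} ≠ 0 := by rwa [measureReal_ne_zero_iff, ← pos_iff_ne_zero]
  have cond_mul_cancel : μ.real {x | g x = a} * (μ[|{x | g x = a}]).real {x | c x = a} =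
      μ.real ({x | c x = a} ∩ {x | g x = a}) := by
    rw [cond_real_eq_div ht, mul_div_cancel₀ _ ht_ne, Set.inter_comm]
  rw [setOf_eq_right_eq_compl hab hcval, setOf_eq_right_eq_compl hab hgval,
    setOf_eq_eq_bihimp hab hcval hgval, ← two_mul_probReal_mul_sub_inter hs ht]
  linear_combination -2 * cond_mul_cancel

end Probability

open scoped ProbabilityTheory in
theorem dev_eq_sub_cond {d : ℕ} (D : Measure (EuclideanSpace ℝ (Fin d)))
    (c : EuclideanSpace ℝ (Fin d) → ℝ) {g : EuclideanSpace ℝ (Fin d) → ℝ} (hg : Measurable g) :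
    dev D c g = D.real {x | c x = 1} - (D[|{x | g x = 1}]).real {x | c x = 1} := by
  have hs : MeasurableSet {x | g x = 1} := hg (measurableSet_singleton 1)
  rw [cond_real_eq_div hs, Set.inter_comm]
  rfl

/-- Lemma 3.3: `2·P{g=1}·d_D(c,g) = P{c=−1}·P{g=−1} + P{c=1}·P{g=1} − P{c=g}`. -/
theorem stmt_0 {d : ℕ} (D : Measure (EuclideanSpace ℝ (Fin d))) [IsProbabilityMeasure D]
    (c g : EuclideanSpace ℝ (Fin d) → ℝ) (hc : Measurable c) (hg : Measurable g)
    (hcval : ∀ x, c x = 1 ∨ c x = -1) (hgval : ∀ x, g x = 1 ∨ g x = -1)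
    (hgpos : 0 < D {x | g x = 1}) :
    2 * (D {x | g x = 1}).toReal * dev D c g =
      (D {x | c x = -1}).toReal * (D {x | g x = -1}).toReal +
        (D {x | c x = 1}).toReal * (D {x | g x = 1}).toReal -
        (D {x | c x = g x}).toReal := by
  rw [dev_eq_sub_cond D c hg]
  exact stmt_0_general (by norm_num) hc hg hcval hgval hgpos
end

section
/- Let D be a probability measure on ℝ^d, let c : ℝ^d → {−1,+1} be measurable, and let g, g' : ℝ^d → {−1,+1} be measurable subgroup indicators with P{g(x)=1} > 0 and P{g'(x)=1} > 0. Then | P{g(x)=1}·|d_D(c,g)| − P{g'(x)=1}·|d_D(c,g')| | ≤ |P{g(x)=1} − P{g'(x)=1}| + |P{c(x)=1 ∧ g(x)=1} − P{c(x)=1 ∧ g'(x)=1}| ≤ 2·P_{x∼D}{g(x) ≠ g'(x)}. -/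
open MeasureTheory

open scoped ENNReal symmDiff

theorem abs_abs_mul_sub_sub_abs_mul_sub_le {R : Type*} [CommRing R] [LinearOrder R]
    [IsOrderedRing R] {a b p u v : R} (hp : |p| ≤ 1) :
    |(|a * p - u| - |b * p - v|)| ≤ |a - b| + |u - v| :=
  calc |(|a * p - u| - |b * p - v|)|
    _ ≤ |(a * p - u) - (b * p - v)| := abs_abs_sub_abs_le _ _
    _ = |(a - b) * p - (u - v)| := by ring_nf
    _ ≤ |(a - b) * p| + |u - v| := abs_sub _ _
    _ ≤ |a - b| + |u - v| := by
      rw [abs_mul]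
      gcongr
      exact mul_le_of_le_one_right (abs_nonneg _) hp

section SymmDiff

variable {Ω : Type*} [MeasurableSpace Ω] {μ : Measure Ω} {s t : Set Ω}

theorem measureReal_le_measureReal_symmDiff_add
    (hs : μ s ≠ ∞ := by finiteness) (ht : μ t ≠ ∞ := by finiteness) :
    μ.real s ≤ μ.real (s ∆ t) + μ.real t := by
  simpa only [symmDiff_bot] using measureReal_symmDiff_le ⊥ hs ht

-- Unlike `abs_measureReal_sub_le_measureReal_symmDiff`, this covers non-measurable sets.
theorem abs_measureReal_sub_le_symmDiff
    (hs : μ s ≠ ∞ := by finiteness) (ht : μ t ≠ ∞ := by finiteness) :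
    |μ.real s - μ.real t| ≤ μ.real (s ∆ t) := by
  refine abs_sub_le_iff.2 ⟨?_, ?_⟩
  · exact sub_le_iff_le_add.2 (measureReal_le_measureReal_symmDiff_add hs ht)
  · rw [symmDiff_comm]
    exact sub_le_iff_le_add.2 (measureReal_le_measureReal_symmDiff_add ht hs)

theorem symmDiff_setOf_eq_subset_setOf_ne {α β : Type*} (f g : α → β) (b : β) :
    {x | f x = b} ∆ {x | g x = b} ⊆ {x | f x ≠ g x} := by
  rintro x (⟨hf, hg⟩ | ⟨hg, hf⟩) hfg
  · exact hg (hfg.symm.trans hf)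
  · exact hf (hfg.trans hg)

end SymmDiff

section ParityDeviation

variable {Ω : Type*} [MeasurableSpace Ω] (μ : Measure Ω) (C G G' : Set Ω)

/-- The statistical-parity deviation `P(C) − P(C | G)` of an event `C` on a subgroup `G`; for
`C = {c = 1}` and `G = {g = 1}` it is `dev`. The conditional probability is written as a quotient,
which also makes sense for non-measurable sets; it takes the junk value `0` when `μ G = 0`. -/
noncomputable def parityDeviation : ℝ :=
  μ.real C - μ.real (C ∩ G) / μ.real G

/-- The deviation of `C` on the subgroup `G`, in absolute value and weighted by the size of `G`. -/
noncomputable def weightedUnfairness : ℝ :=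
  μ.real G * |parityDeviation μ C G|

variable {G G'}

-- The weight clears the denominator, so small subgroups do not spoil the Lipschitz constant.
theorem weightedUnfairness_eq_abs (hG : μ.real G ≠ 0) :
    weightedUnfairness μ C G = |μ.real G * μ.real C - μ.real (C ∩ G)| :=
  calc weightedUnfairness μ C G
    _ = |μ.real G * parityDeviation μ C G| := by
      rw [weightedUnfairness, abs_mul, abs_of_nonneg measureReal_nonneg]
    _ = |μ.real G * μ.real C - μ.real (C ∩ G)| := by
      rw [parityDeviation, mul_sub, mul_div_cancel₀ _ hG]

theorem abs_weightedUnfairness_sub_le [IsProbabilityMeasure μ]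
    (hG : μ.real G ≠ 0) (hG' : μ.real G' ≠ 0) :
    |weightedUnfairness μ C G - weightedUnfairness μ C G'| ≤
      |μ.real G - μ.real G'| + |μ.real (C ∩ G) - μ.real (C ∩ G')| := by
  have hC : |μ.real C| ≤ 1 := (abs_of_nonneg measureReal_nonneg).trans_le measureReal_le_one
  rw [weightedUnfairness_eq_abs μ C hG, weightedUnfairness_eq_abs μ C hG']
  exact abs_abs_mul_sub_sub_abs_mul_sub_le hC

theorem abs_measureReal_sub_add_abs_inter_sub_le [IsFiniteMeasure μ] :
    |μ.real G - μ.real G'| + |μ.real (C ∩ G) - μ.real (C ∩ G')| ≤ 2 * μ.real (G ∆ G') := by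
  have inter_le : |μ.real (C ∩ G) - μ.real (C ∩ G')| ≤ μ.real (G ∆ G') :=
    calc |μ.real (C ∩ G) - μ.real (C ∩ G')|
      _ ≤ μ.real ((C ∩ G) ∆ (C ∩ G')) := abs_measureReal_sub_le_symmDiff
      _ = μ.real (C ∩ (G ∆ G')) := by rw [Set.inter_symmDiff_distrib_left]
      _ ≤ μ.real (G ∆ G') := measureReal_mono Set.inter_subset_right
  rw [two_mul]
  exact add_le_add abs_measureReal_sub_le_symmDiff inter_le

theorem stmt_2_general [IsProbabilityMeasure μ] (hG : 0 < μ G) (hG' : 0 < μ G') :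
    |weightedUnfairness μ C G - weightedUnfairness μ C G'| ≤
      |μ.real G - μ.real G'| + |μ.real (C ∩ G) - μ.real (C ∩ G')| ∧
    |μ.real G - μ.real G'| + |μ.real (C ∩ G) - μ.real (C ∩ G')| ≤ 2 * μ.real (G ∆ G') :=
  ⟨abs_weightedUnfairness_sub_le μ C ((measureReal_ne_zero_iff (by finiteness)).2 hG.ne')
      ((measureReal_ne_zero_iff (by finiteness)).2 hG'.ne'),
    abs_measureReal_sub_add_abs_inter_sub_le μ C⟩

end ParityDeviation

/-- Inequality (3.3): the weighted unfairness is 2-Lipschitz in the subgroup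
indicator with respect to disagreement probability. -/
theorem stmt_2 {d : ℕ} (D : Measure (EuclideanSpace ℝ (Fin d))) [IsProbabilityMeasure D]
    (c g g' : EuclideanSpace ℝ (Fin d) → ℝ)
    (hc : Measurable c) (hg : Measurable g) (hg' : Measurable g')
    (hcval : ∀ x, c x = 1 ∨ c x = -1)
    (hgval : ∀ x, g x = 1 ∨ g x = -1) (hg'val : ∀ x, g' x = 1 ∨ g' x = -1)
    (hgpos : 0 < D {x | g x = 1}) (hg'pos : 0 < D {x | g' x = 1}) :
    |(D {x | g x = 1}).toReal * (abs (dev D c g)) -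
        (D {x | g' x = 1}).toReal * (abs (dev D c g'))| ≤
      |(D {x | g x = 1}).toReal - (D {x | g' x = 1}).toReal| +
        |(D {x | c x = 1 ∧ g x = 1}).toReal - (D {x | c x = 1 ∧ g' x = 1}).toReal| ∧
    |(D {x | g x = 1}).toReal - (D {x | g' x = 1}).toReal| +
        |(D {x | c x = 1 ∧ g x = 1}).toReal - (D {x | c x = 1 ∧ g' x = 1}).toReal| ≤
      2 * (D {x | g x ≠ g' x}).toReal := by
  have ⟨hunfair, hsymm⟩ := stmt_2_general D {x | c x = 1} hgpos hg'pos
  exact ⟨hunfair, hsymm.trans <| mul_le_mul_of_nonneg_left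
    (measureReal_mono (symmDiff_setOf_eq_subset_setOf_ne g g' 1)) zero_le_two⟩
end

section
/- Let D be a probability measure on ℝ^d whose one-dimensional marginals have continuous cumulative distribution functions (for every nonzero u ∈ ℝ^d, t ↦ P_{x∼D}{⟨u,x⟩ ≤ t} is continuous), let c : ℝ^d → {−1,+1} be measurable, let 0 < a ≤ b < 1, and let n be a positive integer. Suppose h* is a halfspace with a ≤ P{h*(x)=1} ≤ b maximizing P{h(x)=1}·|d_D(c,h)| over all halfspaces h with a ≤ P{h(x)=1} ≤ b, and set γ* = P{h*(x)=1}·|d_D(c,h*)|. Suppose also that for each k ∈ {0,…,n}, h_k* is a halfspace maximizing P{h(x)=1}·|d_D(c,h)| over all halfspaces h with P{h(x)=1} = a + k(b−a)/n. Then max_{0≤k≤n} P{h_k*(x)=1}·|d_D(c,h_k*)| ≥ γ* − 2(b−a)/n. -/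
open MeasureTheory
open scoped RealInnerProductSpace

/-- The halfspace `x ↦ +1` if `⟨w,x⟩ ≥ t`, `−1` otherwise. -/
noncomputable def halfspace {d : ℕ} (w : EuclideanSpace ℝ (Fin d)) (t : ℝ) :
    EuclideanSpace ℝ (Fin d) → ℝ :=
  fun x => if t ≤ ⟪w, x⟫ then 1 else -1

/-- Weighted unfairness `P{h=1}·|d_D(c,h)|`. -/
noncomputable def unf {d : ℕ} (D : Measure (EuclideanSpace ℝ (Fin d)))
    (c h : EuclideanSpace ℝ (Fin d) → ℝ) : ℝ :=
  (D {x | h x = 1}).toReal * |dev D c h|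

/-!
As the threshold of a halfspace with fixed normal vector moves, the halfspaces stay nested. For a
halfspace `H` and `C = {c = 1}`, the weighted unfairness is `|P(H) P(C) - P(C ∩ H)|`, whose signed
version is additive in `H` and bounded by `P(H)`; so moving the threshold changes the unfairness by
at most the change in mass. By continuity of the marginal the threshold can be moved until the mass
is the nearest grid value, at distance at most `(b - a) / (2 n)`.
-/

open ProbabilityTheory Set

section ParityGap

variable {Ω : Type*} [MeasurableSpace Ω]

/-- The signed weighted parity deviation `μ(A) μ(C) - μ(C ∩ A)` of the event `C` on the group `A`,
i.e. minus the covariance of their indicators. Unlike `dev`, it involves no division, so it is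
additive in `A`. -/
noncomputable def parityGap (μ : Measure Ω) (C A : Set Ω) : ℝ :=
  μ.real A * μ.real C - μ.real (C ∩ A)

variable {μ : Measure Ω} {A B : Set Ω}

lemma parityGap_sdiff [IsFiniteMeasure μ] (C : Set Ω) (hAB : A ⊆ B) (hA : MeasurableSet A) :
    parityGap μ C (B \ A) = parityGap μ C B - parityGap μ C A := by
  have hsplit : μ.real (C ∩ A) + μ.real (C ∩ (B \ A)) = μ.real (C ∩ B) := by
    rw [← measureReal_inter_add_sdiff (s := C ∩ B) hA, inter_assoc, inter_eq_right.mpr hAB,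
      inter_sdiff_assoc]
  rw [parityGap, parityGap, parityGap, measureReal_sdiff hAB hA, ← hsplit]
  ring

lemma abs_parityGap_le [IsProbabilityMeasure μ] (C A : Set Ω) :
    |parityGap μ C A| ≤ μ.real A :=
  abs_sub_le_of_nonneg_of_le (by positivity)
    (mul_le_of_le_one_right measureReal_nonneg measureReal_le_one)
    measureReal_nonneg (measureReal_mono inter_subset_right)

lemma abs_parityGap_sub_le [IsProbabilityMeasure μ] (C : Set Ω) (hAB : A ⊆ B)
    (hA : MeasurableSet A) :
    |parityGap μ C B - parityGap μ C A| ≤ μ.real B - μ.real A := by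
  rw [← parityGap_sdiff C hAB hA, ← measureReal_sdiff hAB hA]
  exact abs_parityGap_le C (B \ A)

end ParityGap

section Threshold

lemma measureReal_Ici_eq_one_sub_cdf {ν : Measure ℝ} [IsProbabilityMeasure ν]
    (hν : Continuous (cdf ν)) (t : ℝ) : ν.real (Ici t) = 1 - cdf ν t := by
  conv_lhs => rw [← measure_cdf ν]
  rw [measureReal_def, StieltjesFunction.measure_Ici _ (tendsto_cdf_atTop ν),
    hν.continuousWithinAt.leftLim_eq, ENNReal.toReal_ofReal (sub_nonneg.mpr (cdf_le_one ν t))]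

lemma exists_measureReal_Ici_eq {ν : Measure ℝ} [IsProbabilityMeasure ν]
    (hν : Continuous (cdf ν)) {m : ℝ} (hm : m ∈ Ioo 0 1) : ∃ t, ν.real (Ici t) = m := by
  obtain ⟨t, -, ht⟩ : 1 - m ∈ cdf ν '' univ :=
    isPreconnected_univ.intermediate_value_Ioo (by simp) (by simp) hν.continuousOn
      (tendsto_cdf_atBot ν) (tendsto_cdf_atTop ν) ⟨by linarith [hm.2], by linarith [hm.1]⟩
  exact ⟨t, by rw [measureReal_Ici_eq_one_sub_cdf hν, ht, sub_sub_cancel]⟩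

lemma exists_measureReal_preimage_Ici_eq {Ω : Type*} [MeasurableSpace Ω] {μ : Measure Ω}
    [IsProbabilityMeasure μ] {f : Ω → ℝ} (hf : Measurable f)
    (hcont : Continuous fun t => μ.real (f ⁻¹' Iic t)) {m : ℝ} (hm : m ∈ Ioo 0 1) :
    ∃ t, μ.real (f ⁻¹' Ici t) = m := by
  have : IsProbabilityMeasure (μ.map f) := Measure.isProbabilityMeasure_map hf.aemeasurable
  have hcdf : ⇑(cdf (μ.map f)) = fun t => μ.real (f ⁻¹' Iic t) := by
    ext t
    rw [cdf_eq_real, map_measureReal_apply hf measurableSet_Iic]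
  obtain ⟨t, ht⟩ := exists_measureReal_Ici_eq (hcdf ▸ hcont) hm
  exact ⟨t, by rw [← ht, map_measureReal_apply hf measurableSet_Ici]⟩

end Threshold

section Grid

lemma exists_nat_le_abs_sub_le_half {x : ℝ} {n : ℕ} (hx : x ∈ Icc (0 : ℝ) n) :
    ∃ k ≤ n, |x - (k : ℝ)| ≤ 1 / 2 := by
  have hfloor_le : (⌊x + 1 / 2⌋₊ : ℝ) ≤ x + 1 / 2 := Nat.floor_le (by linarith [hx.1])
  have hlt_floor : x + 1 / 2 < ⌊x + 1 / 2⌋₊ + 1 := Nat.lt_floor_add_one _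
  refine ⟨⌊x + 1 / 2⌋₊, ?_, abs_le.mpr ⟨by linarith, by linarith⟩⟩
  have hlt : (⌊x + 1 / 2⌋₊ : ℝ) < (n + 1 : ℕ) := by push_cast; linarith [hx.2]
  exact Nat.lt_succ_iff.mp (Nat.cast_lt.mp hlt)

lemma exists_grid_abs_sub_le {a b m : ℝ} (hm : m ∈ Icc a b) {n : ℕ} (hn : 0 < n) :
    ∃ k ≤ n, |m - (a + k * (b - a) / n)| ≤ (b - a) / (2 * n) := by
  have hab : 0 ≤ b - a := sub_nonneg.mpr (hm.1.trans hm.2)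
  have hn' : (0 : ℝ) < n := Nat.cast_pos.mpr hn
  obtain ⟨θ, ⟨hθ₀, hθ₁⟩, rfl⟩ : ∃ θ ∈ Icc (0 : ℝ) 1, a + θ • (b - a) = m := by
    rwa [← segment_eq_Icc (sub_nonneg.mp hab), segment_eq_image'] at hm
  obtain ⟨k, hk, hdist⟩ := exists_nat_le_abs_sub_le_half (x := θ * n) (n := n)
    ⟨by positivity, mul_le_of_le_one_left hn'.le hθ₁⟩
  refine ⟨k, hk, ?_⟩
  calc |a + θ • (b - a) - (a + k * (b - a) / n)|
      = |(θ * n - k) * ((b - a) / n)| := by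
        congr 1
        rw [smul_eq_mul]
        field_simp
        ring
    _ = |θ * n - k| * ((b - a) / n) := by rw [abs_mul, abs_of_nonneg (div_nonneg hab hn'.le)]
    _ ≤ 1 / 2 * ((b - a) / n) := by gcongr
    _ = (b - a) / (2 * n) := by ring

lemma grid_mem_Icc {a b : ℝ} (hab : a ≤ b) {k n : ℕ} (hk : k ≤ n) :
    a + k * (b - a) / n ∈ Icc a b := by
  have hratio : (k / n : ℝ) ≤ 1 := div_le_one_of_le₀ (Nat.cast_le.mpr hk) n.cast_nonneg
  have hstep : k * (b - a) / n = k / n * (b - a) := by ring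
  rw [hstep]
  exact ⟨le_add_of_nonneg_right (mul_nonneg (by positivity) (sub_nonneg.mpr hab)),
    by linarith [mul_le_of_le_one_left (sub_nonneg.mpr hab) hratio]⟩

end Grid

section Halfspace

variable {d : ℕ} {D : Measure (EuclideanSpace ℝ (Fin d))}

lemma setOf_halfspace_eq_one (w : EuclideanSpace ℝ (Fin d)) (t : ℝ) :
    {x | halfspace w t x = 1} = inner ℝ w ⁻¹' Ici t := by
  ext x
  by_cases hx : t ≤ ⟪w, x⟫ <;> norm_num [halfspace, hx]

lemma measurableSet_halfspace_eq_one (w : EuclideanSpace ℝ (Fin d)) (t : ℝ) :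
    MeasurableSet {x | halfspace w t x = 1} := by
  rw [setOf_halfspace_eq_one]
  exact (innerSL ℝ w).continuous.measurable measurableSet_Ici

lemma antitone_setOf_halfspace_eq_one (w : EuclideanSpace ℝ (Fin d)) :
    Antitone fun t => {x | halfspace w t x = 1} := by
  intro s t hst
  simp only [setOf_halfspace_eq_one]
  exact preimage_mono (Ici_subset_Ici.mpr hst)

lemma exists_measureReal_halfspace_eq [IsProbabilityMeasure D] {w : EuclideanSpace ℝ (Fin d)}
    (hcont : Continuous fun t => D.real {x | ⟪w, x⟫ ≤ t}) {m : ℝ} (hm : m ∈ Ioo 0 1) :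
    ∃ t, D.real {x | halfspace w t x = 1} = m := by
  simp only [setOf_halfspace_eq_one]
  exact exists_measureReal_preimage_Ici_eq (innerSL ℝ w).continuous.measurable hcont hm

lemma unf_eq_abs_parityGap [IsFiniteMeasure D] (c h : EuclideanSpace ℝ (Fin d) → ℝ) :
    unf D c h = |parityGap D {x | c x = 1} {x | h x = 1}| := by
  have hcancel : D.real {x | h x = 1} *
      (D.real ({x | c x = 1} ∩ {x | h x = 1}) / D.real {x | h x = 1}) =
      D.real ({x | c x = 1} ∩ {x | h x = 1}) :=
    mul_div_cancel_of_imp' fun hnull => measureReal_mono_null inter_subset_right hnull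
  calc unf D c h
      = |D.real {x | h x = 1} * (D.real {x | c x = 1} -
          D.real ({x | c x = 1} ∩ {x | h x = 1}) / D.real {x | h x = 1})| := by
        rw [abs_mul, abs_of_nonneg measureReal_nonneg]
        rfl
    _ = |parityGap D {x | c x = 1} {x | h x = 1}| := by rw [mul_sub, hcancel, parityGap]

lemma abs_unf_halfspace_sub_le [IsProbabilityMeasure D] (c : EuclideanSpace ℝ (Fin d) → ℝ)
    (w : EuclideanSpace ℝ (Fin d)) (s t : ℝ) :
    |unf D c (halfspace w s) - unf D c (halfspace w t)| ≤
      |D.real {x | halfspace w s x = 1} - D.real {x | halfspace w t x = 1}| := by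
  wlog hst : s ≤ t generalizing s t
  · simpa only [abs_sub_comm] using this t s (le_of_not_ge hst)
  rw [unf_eq_abs_parityGap, unf_eq_abs_parityGap]
  calc _ ≤ |parityGap D {x | c x = 1} {x | halfspace w s x = 1} -
          parityGap D {x | c x = 1} {x | halfspace w t x = 1}| := abs_abs_sub_abs_le _ _
    _ ≤ D.real {x | halfspace w s x = 1} - D.real {x | halfspace w t x = 1} :=
        abs_parityGap_sub_le _ (antitone_setOf_halfspace_eq_one w hst)
          (measurableSet_halfspace_eq_one w t)
    _ ≤ _ := le_abs_self _

end Halfspace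

theorem stmt_3_general {d : ℕ} (D : Measure (EuclideanSpace ℝ (Fin d))) [IsProbabilityMeasure D]
    (c : EuclideanSpace ℝ (Fin d) → ℝ) {a b : ℝ} (ha : 0 < a) (hb : b < 1) {n : ℕ} (hn : 0 < n)
    {w : EuclideanSpace ℝ (Fin d)} (hcont : Continuous fun t => D.real {x | ⟪w, x⟫ ≤ t}) {t : ℝ}
    (hmass : D.real {x | halfspace w t x = 1} ∈ Icc a b) :
    ∃ k ≤ n, ∃ s, D.real {x | halfspace w s x = 1} = a + k * (b - a) / n ∧
      |unf D c (halfspace w t) - unf D c (halfspace w s)| ≤ (b - a) / (2 * n) := by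
  obtain ⟨k, hk, hdist⟩ := exists_grid_abs_sub_le hmass hn
  have hgrid : a + k * (b - a) / n ∈ Icc a b := grid_mem_Icc (hmass.1.trans hmass.2) hk
  obtain ⟨s, hs⟩ :=
    exists_measureReal_halfspace_eq hcont ⟨ha.trans_le hgrid.1, hgrid.2.trans_lt hb⟩
  exact ⟨k, hk, s, hs, (abs_unf_halfspace_sub_le c w t s).trans (hs ▸ hdist)⟩

/-- Proposition 3.2: maximizing weighted unfairness over halfspaces whose mass is
constrained to a grid of `n+1` values loses at most `2(b−a)/n` relative to the
optimum over all halfspaces of mass between `a` and `b`. -/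
theorem stmt_3 {d : ℕ} (D : Measure (EuclideanSpace ℝ (Fin d))) [IsProbabilityMeasure D]
    (hcont : ∀ u : EuclideanSpace ℝ (Fin d), u ≠ 0 →
      Continuous fun t : ℝ => (D {x | ⟪u, x⟫ ≤ t}).toReal)
    (c : EuclideanSpace ℝ (Fin d) → ℝ) (hc : Measurable c)
    (hcval : ∀ x, c x = 1 ∨ c x = -1)
    (a b : ℝ) (ha : 0 < a) (hab : a ≤ b) (hb : b < 1)
    (n : ℕ) (hn : 0 < n)
    -- the constrained global optimizer h* = halfspace wS tS
    (wS : EuclideanSpace ℝ (Fin d)) (hwS : wS ≠ 0) (tS : ℝ)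
    (hmassS : a ≤ (D {x | halfspace wS tS x = 1}).toReal ∧
      (D {x | halfspace wS tS x = 1}).toReal ≤ b)
    (hoptS : ∀ w : EuclideanSpace ℝ (Fin d), w ≠ 0 → ∀ t : ℝ,
      a ≤ (D {x | halfspace w t x = 1}).toReal →
      (D {x | halfspace w t x = 1}).toReal ≤ b →
      unf D c (halfspace w t) ≤ unf D c (halfspace wS tS))
    (γS : ℝ) (hγS : γS = unf D c (halfspace wS tS))
    -- the per-grid-point optimizers h_k* = halfspace (wk k) (tk k)
    (wk : ℕ → EuclideanSpace ℝ (Fin d)) (tk : ℕ → ℝ)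
    (hwk : ∀ k ≤ n, wk k ≠ 0)
    (hmassk : ∀ k ≤ n,
      (D {x | halfspace (wk k) (tk k) x = 1}).toReal = a + k * (b - a) / n)
    (hoptk : ∀ k ≤ n, ∀ w : EuclideanSpace ℝ (Fin d), w ≠ 0 → ∀ t : ℝ,
      (D {x | halfspace w t x = 1}).toReal = a + k * (b - a) / n →
      unf D c (halfspace w t) ≤ unf D c (halfspace (wk k) (tk k))) :
    ∃ k ≤ n, unf D c (halfspace (wk k) (tk k)) ≥ γS - 2 * (b - a) / n := by
  obtain ⟨k, hk, s, hs, hclose⟩ := stmt_3_general D c ha hb hn (hcont wS hwS) hmassS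
  have hslack : (b - a) / (2 * n) ≤ 2 * (b - a) / n :=
    have hn' : (0 : ℝ) < n := Nat.cast_pos.mpr hn
    div_le_div₀ (by linarith) (by linarith) hn' (by linarith)
  exact ⟨k, hk, by linarith [hoptk k hk wS hwS s hs, (abs_le.mp hclose).2]⟩
end

section
/- Let D be a probability measure on ℝ^d and let c, g₁, g₂ : ℝ^d → {−1,+1} be measurable. Suppose that for D-almost every x at least one of g₁(x)=1 and g₂(x)=1 holds, let B = {x : g₁(x)=1 and g₂(x)=1}, and suppose P{g₁(x)=1} > 0, P{g₂(x)=1} > 0, and P{x ∈ B} > 0. Then P{g₁(x)=1}·d_D(c,g₁) + P{g₂(x)=1}·d_D(c,g₂) = P{x ∈ B}·( P{c(x)=1} − P{c(x)=1 | x ∈ B} ). -/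
open MeasureTheory

/-! The quantity `μ S * (μ A - μ(A | S)) = μ S * μ A - μ (A ∩ S)` is modular in `S` and vanishes on
sets of full measure. Hence if `S ∪ T` has full measure, its values at `S` and `T` add up to its
value at `S ∩ T`. -/

section WeightedDev

variable {Ω : Type*} [MeasurableSpace Ω] {μ : Measure Ω} {S T : Set Ω}

lemma measureReal_inter_union_add_inter_inter (A S : Set Ω) (hT : NullMeasurableSet T μ)
    (hA : μ A ≠ ⊤ := by finiteness) :
    μ.real (A ∩ (S ∪ T)) + μ.real (A ∩ (S ∩ T)) = μ.real (A ∩ S) + μ.real (A ∩ T) := by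
  have hfin (U : Set Ω) : μ (A ∩ U) ≠ ⊤ := measure_ne_top_of_subset Set.inter_subset_left hA
  have split_union : μ.real (A ∩ T) + μ.real ((A ∩ S) \ T) = μ.real (A ∩ (S ∪ T)) := by
    rw [← measureReal_inter_add_sdiff₀ hT (hfin (S ∪ T)), Set.inter_assoc,
      Set.union_inter_cancel_right, Set.inter_sdiff_assoc, Set.inter_sdiff_assoc,
      Set.union_sdiff_right]
  have split_left : μ.real (A ∩ (S ∩ T)) + μ.real ((A ∩ S) \ T) = μ.real (A ∩ S) := by
    rw [← Set.inter_assoc, measureReal_inter_add_sdiff₀ hT (hfin S)]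
  linarith

/-- The deviation `μ A - μ(A | S)` weighted by `μ S`, with the denominator of the conditional
probability cleared; for a probability measure it is minus the covariance of the indicators of
`A` and `S`. -/
noncomputable def weightedDev (μ : Measure Ω) (A S : Set Ω) : ℝ :=
  μ.real S * μ.real A - μ.real (A ∩ S)

lemma measureReal_mul_sub_div_eq_weightedDev (A : Set Ω) (hS : μ S ≠ 0)
    (hS_fin : μ S ≠ ⊤ := by finiteness) :
    μ.real S * (μ.real A - μ.real (A ∩ S) / μ.real S) = weightedDev μ A S := by
  rw [weightedDev, mul_sub, mul_div_cancel₀ _ ((measureReal_ne_zero_iff hS_fin).2 hS)]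

lemma weightedDev_union_add_inter [IsFiniteMeasure μ] (A S : Set Ω)
    (hT : NullMeasurableSet T μ) :
    weightedDev μ A (S ∪ T) + weightedDev μ A (S ∩ T) =
      weightedDev μ A S + weightedDev μ A T := by
  have total := measureReal_union_add_inter₀ (s := S) hT
  have within := measureReal_inter_union_add_inter_inter A S hT
  unfold weightedDev
  linear_combination μ.real A * total - within

lemma weightedDev_eq_zero_of_ae_mem [IsProbabilityMeasure μ] (A : Set Ω)
    (hS : ∀ᵐ x ∂μ, x ∈ S) : weightedDev μ A S = 0 := by
  have hS_one : μ.real S = 1 :=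
    (measureReal_congr (Filter.eventuallyEq_univ.2 hS)).trans probReal_univ
  have hA_inter : μ.real (A ∩ S) = μ.real A := by
    rw [Set.inter_comm, measureReal_def, Measure.measure_inter_eq_of_ae hS, measureReal_def]
  rw [weightedDev, hS_one, hA_inter, one_mul, sub_self]

theorem stmt_7_general [IsProbabilityMeasure μ] (A : Set Ω) (hT : NullMeasurableSet T μ)
    (hcover : ∀ᵐ x ∂μ, x ∈ S ∪ T) (hST : μ (S ∩ T) ≠ 0) :
    μ.real S * (μ.real A - μ.real (A ∩ S) / μ.real S) +
        μ.real T * (μ.real A - μ.real (A ∩ T) / μ.real T) =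
      μ.real (S ∩ T) * (μ.real A - μ.real (A ∩ (S ∩ T)) / μ.real (S ∩ T)) := by
  have hS : μ S ≠ 0 := fun h => hST (measure_mono_null Set.inter_subset_left h)
  have hT₀ : μ T ≠ 0 := fun h => hST (measure_mono_null Set.inter_subset_right h)
  rw [measureReal_mul_sub_div_eq_weightedDev A hS, measureReal_mul_sub_div_eq_weightedDev A hT₀,
    measureReal_mul_sub_div_eq_weightedDev A hST, ← weightedDev_union_add_inter A S hT,
    weightedDev_eq_zero_of_ae_mem A hcover, zero_add]

end WeightedDev

/-- The identity `I₁ − I₂` in the proof of Theorem 4.2: for two subgroups that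
cover the space almost surely and overlap exactly on `B`,
`P{g₁=1}·d_D(c,g₁) + P{g₂=1}·d_D(c,g₂) = P{B}·(P{c=1} − P{c=1 | B})`. -/
theorem stmt_7 {d : ℕ} (D : Measure (EuclideanSpace ℝ (Fin d))) [IsProbabilityMeasure D]
    (c g₁ g₂ : EuclideanSpace ℝ (Fin d) → ℝ)
    (hc : Measurable c) (hg₁ : Measurable g₁) (hg₂ : Measurable g₂)
    (hcval : ∀ x, c x = 1 ∨ c x = -1)
    (hg₁val : ∀ x, g₁ x = 1 ∨ g₁ x = -1) (hg₂val : ∀ x, g₂ x = 1 ∨ g₂ x = -1)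
    (hcover : ∀ᵐ x ∂D, g₁ x = 1 ∨ g₂ x = 1)
    (B : Set (EuclideanSpace ℝ (Fin d)))
    (hB : B = {x | g₁ x = 1 ∧ g₂ x = 1})
    (hg₁pos : 0 < D {x | g₁ x = 1}) (hg₂pos : 0 < D {x | g₂ x = 1})
    (hBpos : 0 < D B) :
    (D {x | g₁ x = 1}).toReal * dev D c g₁ +
        (D {x | g₂ x = 1}).toReal * dev D c g₂ =
      (D B).toReal *
        ((D {x | c x = 1}).toReal -
          (D ({x | c x = 1} ∩ B)).toReal / (D B).toReal) := by
  subst hB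
  exact stmt_7_general {x | c x = 1} (hg₂ (measurableSet_singleton 1)).nullMeasurableSet hcover
    hBpos.ne'
end

section
/- Let d ≥ 1, let s ∈ ℝ^d with ‖s‖₂ = 1, let σ > 0 and T > 0, let x ∼ N(0, I_d) and z ∼ N(0, σ²) be independent, and define Y = +1 if mod_T(sᵀx + z) ≤ T/2 and Y = −1 otherwise. Define the halfspaces h₁(x) = +1 iff sᵀx ≥ T/6 and h₂(x) = +1 iff sᵀx ≤ T/3, and let B = {x : sᵀx ∈ [T/6, T/3]}. Then max( P{h₁(x)=1}·|d(Y,h₁)|, P{h₂(x)=1}·|d(Y,h₂)| ) ≥ (1/2)·P{x ∈ B}·( 1/2 − P{|z| ≥ T/6} ), where d(Y,h) = P{Y=1} − P{Y=1 | h(x)=1}. -/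
open MeasureTheory ProbabilityTheory
open scoped RealInnerProductSpace

/-- `modT T w` is the unique representative of `w` modulo `T` lying in `[0, T)`
(for `T > 0`). -/
noncomputable def modT (T w : ℝ) : ℝ := w - T * ⌊w / T⌋

/-- The standard Gaussian measure `N(0, I_d)` on `ℝ^d`. -/
noncomputable def stdGaussian (d : ℕ) : Measure (EuclideanSpace ℝ (Fin d)) :=
  Measure.map (EuclideanSpace.equiv (Fin d) ℝ).symm
    (Measure.pi fun _ : Fin d => gaussianReal 0 1)

/-- For a joint distribution `P`, label event `E` (i.e. `{Y = 1}`) and subgroup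
event `H` (i.e. `{h(x) = 1}`), the weighted unfairness
`P{H}·|P{Y=1} − P{Y=1 | H}|`. -/
noncomputable def wUnf {Ω : Type*} [MeasurableSpace Ω] (P : Measure Ω)
    (E H : Set Ω) : ℝ :=
  (P H).toReal * |(P E).toReal - (P (E ∩ H)).toReal / (P H).toReal|

/-!
The label `mod_T(sᵀx + z) ≤ T/2` is positive with probability at most one half, because `sᵀx + z` is
symmetric without atoms and the set of positively labelled reals meets its own reflection only in
the countable set `(T/2)ℤ`. On the slab `B`, however, the label is positive as soon as the noise is
smaller than `T/6`, so the label and `B` are positively correlated. The two halfspaces cover the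
space and intersect in `B`, hence the covariances of the label with the halfspaces add up to its
covariance with `B`, and one of them is at least half of it.
-/

section Symmetric

variable {G : Type*} [MeasurableSpace G]

lemma isNegInvariant_conv [AddCommGroup G] [MeasurableAdd₂ G] [MeasurableNeg G]
    (μ ν : Measure G) [SFinite μ] [SFinite ν] [μ.IsNegInvariant] [ν.IsNegInvariant] :
    (μ ∗ ν).IsNegInvariant where
  neg_eq_self := by
    change (μ ∗ ν).map (negAddMonoidHom : G →+ G) = μ ∗ ν
    rw [Measure.map_conv_addMonoidHom _ measurable_neg]
    exact congrArg₂ _ (Measure.map_neg_eq_self μ) (Measure.map_neg_eq_self ν)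

lemma nullSingletonClass_conv [AddGroup G] [MeasurableAdd₂ G] [MeasurableSingletonClass G]
    (μ ν : Measure G) [SFinite ν] [NullSingletonClass ν] : NullSingletonClass (μ ∗ ν) where
  measure_singleton x := by
    have slice_null (y : G) : ν (Prod.mk y ⁻¹' ((fun p : G × G ↦ p.1 + p.2) ⁻¹' {x})) = 0 :=
      measure_mono_null (fun z hz ↦ eq_neg_add_of_add_eq hz) (measure_singleton (-y + x))
    rw [Measure.conv, Measure.map_apply measurable_add (measurableSet_singleton x),
      Measure.measure_prod_null (measurable_add (measurableSet_singleton x))]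
    exact Filter.Eventually.of_forall slice_null

lemma measureReal_le_half_of_inter_neg_null [InvolutiveNeg G] [MeasurableNeg G]
    (μ : Measure G) [IsProbabilityMeasure μ] [μ.IsNegInvariant] {A : Set G}
    (hA : MeasurableSet A) (hnull : μ (A ∩ -A) = 0) : μ.real A ≤ 1 / 2 := by
  have hneg : μ.real (-A) = μ.real A := congrArg ENNReal.toReal (Measure.measure_neg μ A)
  have hinter : μ.real (A ∩ -A) = 0 := by rw [measureReal_def, hnull, ENNReal.toReal_zero]
  have hunion : μ.real (A ∪ -A) ≤ 1 := measureReal_le_one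
  have := measureReal_union_add_inter (μ := μ) (s := A) hA.neg
  linarith

end Symmetric

section Modulus

variable {T : ℝ}

lemma measurable_modT (T : ℝ) : Measurable (modT T) := by
  unfold modT
  fun_prop

lemma modT_eq_toIcoMod (hT : 0 < T) (w : ℝ) : modT T w = toIcoMod hT 0 w := by
  rw [toIcoMod, toIcoDiv_eq_floor, modT, sub_zero, zsmul_eq_mul, mul_comm]

lemma modT_add_le_half (hT : 0 < T) {a b r x z : ℝ} (hra : r ≤ a) (hbr : b + r ≤ T / 2)
    (hx : x ∈ Set.Icc a b) (hz : |z| < r) : modT T (x + z) ≤ T / 2 := by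
  obtain ⟨hax, hxb⟩ := hx
  obtain ⟨hrz, hzr⟩ := abs_lt.mp hz
  have hmem : x + z ∈ Set.Ico 0 (0 + T) := ⟨by linarith, by linarith⟩
  rw [modT_eq_toIcoMod hT, (toIcoMod_eq_self hT).mpr hmem]
  linarith

lemma mem_zmultiples_half_of_modT_le_of_modT_neg_le (hT : 0 < T) {w : ℝ}
    (hw : modT T w ≤ T / 2) (hnegw : modT T (-w) ≤ T / 2) :
    w ∈ AddSubgroup.zmultiples (T / 2) := by
  rw [modT_eq_toIcoMod hT] at hw hnegw
  rw [toIcoMod_neg, neg_zero] at hnegw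
  have hmod : toIcoMod hT 0 w = 0 ∨ toIcoMod hT 0 w = T / 2 := by
    by_cases hw₀ : 0 ≡ w [PMOD T]
    · exact .inl ((AddCommGroup.modEq_iff_toIcoMod_eq_left hT).mp hw₀)
    · have := (AddCommGroup.not_modEq_iff_toIcoMod_eq_toIocMod hT).mp hw₀
      exact .inr (by linarith)
  have hperiod : T ∈ AddSubgroup.zmultiples (T / 2) := ⟨2, by simp only [zsmul_eq_mul]; ring⟩
  rw [← toIcoMod_add_toIcoDiv_zsmul hT 0 w]
  refine add_mem ?_ (zsmul_mem hperiod _)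
  obtain hzero | hhalf := hmod
  · rw [hzero]
    exact zero_mem _
  · rw [hhalf]
    exact AddSubgroup.mem_zmultiples _

lemma measureReal_modT_le_half (hT : 0 < T) (μ : Measure ℝ) [IsProbabilityMeasure μ]
    [μ.IsNegInvariant] [NullSingletonClass μ] : μ.real {w | modT T w ≤ T / 2} ≤ 1 / 2 := by
  refine measureReal_le_half_of_inter_neg_null μ
    (measurableSet_le (measurable_modT T) measurable_const) ?_
  have hcountable : (AddSubgroup.zmultiples (T / 2) : Set ℝ).Countable := Set.countable_range _
  exact measure_mono_null
    (fun _ hw ↦ mem_zmultiples_half_of_modT_le_of_modT_neg_le hT hw.1 hw.2)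
    (hcountable.measure_zero μ)

end Modulus

section WeightedUnfairness

variable {Ω : Type*} [MeasurableSpace Ω] (P : Measure Ω) {E H₁ H₂ : Set Ω}

lemma wUnf_eq_abs_sub [IsFiniteMeasure P] (E H : Set Ω) :
    wUnf P E H = |P.real (E ∩ H) - P.real E * P.real H| := by
  change P.real H * |P.real E - P.real (E ∩ H) / P.real H| = _
  obtain hzero | hpos := (measureReal_nonneg (μ := P) (s := H)).eq_or_lt
  · have hinter : P.real (E ∩ H) = 0 :=
      le_antisymm (hzero ▸ measureReal_mono Set.inter_subset_right) measureReal_nonneg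
    simp [← hzero, hinter]
  · rw [abs_sub_comm, ← abs_of_pos hpos, ← abs_mul, abs_of_pos hpos]
    congr 1
    field_simp

lemma sub_mul_le_wUnf_add_wUnf [IsProbabilityMeasure P] (hE : MeasurableSet E)
    (hH₂ : MeasurableSet H₂) (hcover : H₁ ∪ H₂ = Set.univ) :
    P.real (E ∩ (H₁ ∩ H₂)) - P.real E * P.real (H₁ ∩ H₂) ≤ wUnf P E H₁ + wUnf P E H₂ := by
  have hH : P.real H₁ + P.real H₂ = 1 + P.real (H₁ ∩ H₂) := by
    rw [← measureReal_union_add_inter hH₂, hcover, probReal_univ]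
  have hEH : P.real (E ∩ H₁) + P.real (E ∩ H₂) = P.real E + P.real (E ∩ (H₁ ∩ H₂)) := by
    rw [← measureReal_union_add_inter (hE.inter hH₂), ← Set.inter_union_distrib_left, hcover,
      Set.inter_univ, ← Set.inter_inter_distrib_left]
  rw [wUnf_eq_abs_sub, wUnf_eq_abs_sub]
  calc P.real (E ∩ (H₁ ∩ H₂)) - P.real E * P.real (H₁ ∩ H₂)
      = (P.real (E ∩ H₁) - P.real E * P.real H₁) + (P.real (E ∩ H₂) - P.real E * P.real H₂) := by
        linear_combination P.real E * hH - hEH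
    _ ≤ _ := add_le_add (le_abs_self _) (le_abs_self _)

end WeightedUnfairness

section NoisyLabel

variable {V : Type*} [MeasurableSpace V] (μ : Measure V)
  (ν : Measure ℝ) [IsProbabilityMeasure ν] {X : V → ℝ} {T : ℝ}

lemma prod_real_modT_le_half [IsProbabilityMeasure μ] [NullSingletonClass ν]
    [(μ.map X).IsNegInvariant] [ν.IsNegInvariant] (hX : Measurable X) (hT : 0 < T) :
    (μ.prod ν).real {p | modT T (X p.1 + p.2) ≤ T / 2} ≤ 1 / 2 := by
  have : IsProbabilityMeasure (μ.map X) := Measure.isProbabilityMeasure_map hX.aemeasurable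
  have := isNegInvariant_conv (μ.map X) ν
  have := nullSingletonClass_conv (μ.map X) ν
  have map_add : (μ.prod ν).map (fun p ↦ X p.1 + p.2) = μ.map X ∗ ν := by
    conv_rhs => rw [← Measure.map_id (μ := ν)]
    rw [Measure.conv, Measure.map_prod_map _ _ hX measurable_id,
      Measure.map_map measurable_add (hX.prodMap measurable_id)]
    rfl
  have hlabel := measureReal_modT_le_half hT (μ.map X ∗ ν)
  rwa [← map_add, map_measureReal_apply (by fun_prop)
    (measurableSet_le (measurable_modT T) measurable_const)] at hlabel

lemma mul_one_sub_le_prod_real_modT_inter [IsFiniteMeasure μ] (hT : 0 < T) {a b r : ℝ}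
    (hra : r ≤ a) (hbr : b + r ≤ T / 2) :
    μ.real {x | X x ∈ Set.Icc a b} * (1 - ν.real {z | r ≤ |z|}) ≤
      (μ.prod ν).real ({p | modT T (X p.1 + p.2) ≤ T / 2} ∩
        ({p | a ≤ X p.1} ∩ {p | X p.1 ≤ b})) := by
  have hnoise : MeasurableSet {z : ℝ | r ≤ |z|} := measurableSet_le measurable_const (by fun_prop)
  rw [← probReal_compl_eq_one_sub hnoise, ← measureReal_prod_prod]
  refine measureReal_mono ?_
  rintro ⟨x, z⟩ ⟨hx, hz⟩
  exact ⟨modT_add_le_half hT hra hbr hx (not_le.mp hz), hx⟩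

theorem stmt_12_general [IsProbabilityMeasure μ] [NullSingletonClass ν]
    [(μ.map X).IsNegInvariant] [ν.IsNegInvariant] (hX : Measurable X) (hT : 0 < T)
    {a b r : ℝ} (hra : r ≤ a) (hab : a ≤ b) (hbr : b + r ≤ T / 2) :
    max
      (wUnf (μ.prod ν) {p | modT T (X p.1 + p.2) ≤ T / 2} {p | a ≤ X p.1})
      (wUnf (μ.prod ν) {p | modT T (X p.1 + p.2) ≤ T / 2} {p | X p.1 ≤ b}) ≥
    (1 / 2) * μ.real {x | X x ∈ Set.Icc a b} * (1 / 2 - ν.real {z | r ≤ |z|}) := by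
  set E : Set (V × ℝ) := {p | modT T (X p.1 + p.2) ≤ T / 2}
  set H₁ : Set (V × ℝ) := {p | a ≤ X p.1}
  set H₂ : Set (V × ℝ) := {p | X p.1 ≤ b}
  have hE : MeasurableSet E :=
    measurableSet_le ((measurable_modT T).comp (by fun_prop)) measurable_const
  have hH₂ : MeasurableSet H₂ := measurableSet_le (by fun_prop) measurable_const
  have hcover : H₁ ∪ H₂ = Set.univ :=
    Set.eq_univ_of_forall fun p ↦ (le_total a (X p.1)).imp id fun h ↦ h.trans hab
  have hslab : (μ.prod ν).real (H₁ ∩ H₂) = μ.real {x | X x ∈ Set.Icc a b} := by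
    have : H₁ ∩ H₂ = {x | X x ∈ Set.Icc a b} ×ˢ Set.univ := by
      ext
      simp [H₁, H₂]
    rw [this, measureReal_prod_prod, probReal_univ, mul_one]
  have hsum := sub_mul_le_wUnf_add_wUnf (μ.prod ν) hE hH₂ hcover
  have hjoint : _ ≤ (μ.prod ν).real (E ∩ (H₁ ∩ H₂)) :=
    mul_one_sub_le_prod_real_modT_inter μ ν hT hra hbr
  have hlabel : (μ.prod ν).real E * (μ.prod ν).real (H₁ ∩ H₂) ≤
      1 / 2 * (μ.prod ν).real (H₁ ∩ H₂) :=
    mul_le_mul_of_nonneg_right (prod_real_modT_le_half μ ν hX hT) measureReal_nonneg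
  rw [hslab] at hsum hlabel
  linarith [le_max_left (wUnf (μ.prod ν) E H₁) (wUnf (μ.prod ν) E H₂),
    le_max_right (wUnf (μ.prod ν) E H₁) (wUnf (μ.prod ν) E H₂)]

end NoisyLabel

section Gaussian

instance isNegInvariant_gaussianReal_zero (v : NNReal) : (gaussianReal 0 v).IsNegInvariant where
  neg_eq_self := by rw [Measure.neg_def, gaussianReal_map_neg, neg_zero]

lemma stdGaussian_eq_stdGaussian_euclideanSpace (d : ℕ) :
    _root_.stdGaussian d = ProbabilityTheory.stdGaussian (EuclideanSpace ℝ (Fin d)) :=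
  map_pi_eq_stdGaussian

instance isProbabilityMeasure_stdGaussian (d : ℕ) :
    IsProbabilityMeasure (_root_.stdGaussian d) :=
  stdGaussian_eq_stdGaussian_euclideanSpace d ▸ inferInstance

instance isNegInvariant_map_inner_stdGaussian {d : ℕ} (s : EuclideanSpace ℝ (Fin d)) :
    ((_root_.stdGaussian d).map (⟪s, ·⟫)).IsNegInvariant := by
  change ((_root_.stdGaussian d).map (innerSL ℝ s)).IsNegInvariant
  rw [stdGaussian_eq_stdGaussian_euclideanSpace, IsGaussian.map_eq_gaussianReal,
    integral_strongDual_stdGaussian]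
  infer_instance

end Gaussian

/-- The alternative-hypothesis case in the proof of Theorem 4.2: under the LWE
alternative distribution, one of the two halfspaces `h₁(x) = sign(sᵀx − T/6)`,
`h₂(x) = sign(T/3 − sᵀx)` has weighted unfairness at least
`(1/2)·P{B}·(1/2 − P{|z| ≥ T/6})`, where `B = {x : sᵀx ∈ [T/6, T/3]}`. -/
theorem stmt_12 (d : ℕ) (hd : 1 ≤ d) (s : EuclideanSpace ℝ (Fin d)) (hs : ‖s‖ = 1)
    (σ : ℝ) (hσ : 0 < σ) (T : ℝ) (hT : 0 < T) :
    max
      (wUnf ((stdGaussian d).prod (gaussianReal 0 ⟨σ ^ 2, sq_nonneg σ⟩))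
        {p : EuclideanSpace ℝ (Fin d) × ℝ | modT T (⟪s, p.1⟫ + p.2) ≤ T / 2}
        {p : EuclideanSpace ℝ (Fin d) × ℝ | T / 6 ≤ ⟪s, p.1⟫})
      (wUnf ((stdGaussian d).prod (gaussianReal 0 ⟨σ ^ 2, sq_nonneg σ⟩))
        {p : EuclideanSpace ℝ (Fin d) × ℝ | modT T (⟪s, p.1⟫ + p.2) ≤ T / 2}
        {p : EuclideanSpace ℝ (Fin d) × ℝ | ⟪s, p.1⟫ ≤ T / 3}) ≥
    (1 / 2) * (stdGaussian d {x | ⟪s, x⟫ ∈ Set.Icc (T / 6) (T / 3)}).toReal *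
      (1 / 2 - (gaussianReal 0 ⟨σ ^ 2, sq_nonneg σ⟩ {z : ℝ | T / 6 ≤ |z|}).toReal) := by
  set v : NNReal := ⟨σ ^ 2, sq_nonneg σ⟩
  have := nullSingletonClass_gaussianReal (μ := 0) (v := v)
    (NNReal.coe_ne_zero.mp (pow_pos hσ 2).ne')
  exact stmt_12_general _ _ (X := (⟪s, ·⟫)) (by fun_prop) hT le_rfl (by linarith) (by linarith)
end
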